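/- arXiv:2301.07387 — 2 statements merged into one kernel-verified Lean document; each statement's English description precedes it below -/
import Mathlib

section
/- For every integer p ≥ 2 and all ρ, σ, τ ∈ ℂ, each of the generator matrices R₁, R₂, R₃ lies in SU(H): for j = 1, 2, 3 one has Rⱼ^† · H · Rⱼ = H (where † denotes conjugate transpose) and det(Rⱼ) = 1. -/
open Matrix

noncomputable section

/-- `u = exp(2πi/(3p))`. -/
def uPar (p : ℕ) : ℂ := Complex.exp (2 * Real.pi * Complex.I / (3 * p))

/-- `α = 2 − u³ − conj(u)³`. -/
def alphaPar (p : ℕ) : ℂ :=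
  2 - uPar p ^ 3 - starRingEnd ℂ (uPar p) ^ 3

/-- `βⱼ = (conj(u)² − u)·ρⱼ`. -/
def betaPar (p : ℕ) (t : ℂ) : ℂ := (starRingEnd ℂ (uPar p) ^ 2 - uPar p) * t

/-- The Hermitian matrix `H` of the triangle group `T(p,(ρ,σ,τ))`. -/
def Hmat (p : ℕ) (ρ σ τ : ℂ) : Matrix (Fin 3) (Fin 3) ℂ :=
  !![alphaPar p, betaPar p ρ, starRingEnd ℂ (betaPar p τ);
     starRingEnd ℂ (betaPar p ρ), alphaPar p, betaPar p σ;
     betaPar p τ, starRingEnd ℂ (betaPar p σ), alphaPar p]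

/-- The generator `R₁`. -/
def R1mat (p : ℕ) (ρ σ τ : ℂ) : Matrix (Fin 3) (Fin 3) ℂ :=
  !![uPar p ^ 2, ρ, -(uPar p) * starRingEnd ℂ τ;
     0, starRingEnd ℂ (uPar p), 0;
     0, 0, starRingEnd ℂ (uPar p)]

/-- The generator `R₂`. -/
def R2mat (p : ℕ) (ρ σ τ : ℂ) : Matrix (Fin 3) (Fin 3) ℂ :=
  !![starRingEnd ℂ (uPar p), 0, 0;
     -(uPar p) * starRingEnd ℂ ρ, uPar p ^ 2, σ;
     0, 0, starRingEnd ℂ (uPar p)]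

/-- The generator `R₃`. -/
def R3mat (p : ℕ) (ρ σ τ : ℂ) : Matrix (Fin 3) (Fin 3) ℂ :=
  !![starRingEnd ℂ (uPar p), 0, 0;
     0, starRingEnd ℂ (uPar p), 0;
     τ, -(uPar p) * starRingEnd ℂ σ, uPar p ^ 2]

end

/-!
Each `Rⱼ` is a rank-one perturbation `conj(u) • 1 + eⱼ wⱼᵀ`, and `H = (conj(u)² − u) • W` where `W`
has rows `wⱼ`. For any Hermitian `H` and `R = μ • 1 + v wᵀ` with `v* H = conj(wᵀ v) • wᵀ`, expanding
gives `R* H R = |μ|² H + (|μ + wᵀ v|² − |μ|²) conj(w) wᵀ`, which is `H` as soon as the two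
eigenvalues `μ` and `μ + wᵀ v` of `R` have modulus one. For `Rⱼ` they are `conj(u)`, twice, and
`u²`, with product `1`.
-/

section ComplexReflection

variable {n R : Type*} [DecidableEq n] [CommRing R]

/-- The matrix `μ • 1 + v wᵀ`, a scalar multiple of a complex reflection when `μ` is invertible:
it acts as `μ` on the hyperplane `wᵀ x = 0` and has `v` as an eigenvector for `μ + wᵀ v`. -/
def complexReflection (μ : R) (v w : n → R) : Matrix n n R :=
  μ • 1 + vecMulVec v w

theorem conjTranspose_complexReflection [StarRing R] (μ : R) (v w : n → R) :
    (complexReflection μ v w)ᴴ = complexReflection (star μ) (star w) (star v) := by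
  simp [complexReflection, conjTranspose_vecMulVec]

variable [Fintype n]

theorem complexReflection_mul (μ : R) (v w : n → R) (A : Matrix n n R) :
    complexReflection μ v w * A = μ • A + vecMulVec v (w ᵥ* A) := by
  simp [complexReflection, add_mul, vecMulVec_mul]

theorem mul_complexReflection (μ : R) (v w : n → R) (A : Matrix n n R) :
    A * complexReflection μ v w = μ • A + vecMulVec (A *ᵥ v) w := by
  simp [complexReflection, mul_add, mul_vecMulVec]

theorem det_complexReflection (μ : R) (v w : n → R) :
    (complexReflection μ v w).det =
      μ ^ Fintype.card n + (v ⬝ᵥ w) * μ ^ (Fintype.card n - 1) := by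
  have h := congrArg (Polynomial.eval μ) (charpoly_vecMulVec (-v) w)
  simpa [eval_charpoly, complexReflection, smul_one_eq_diagonal, neg_vecMulVec] using h

theorem conjTranspose_complexReflection_mul_mul [StarRing R] {H : Matrix n n R}
    (hH : H.IsHermitian) {μ : R} {v w : n → R} (hμ : μ ∈ unitary R) (hν : μ + w ⬝ᵥ v ∈ unitary R)
    (hvw : star v ᵥ* H = star (w ⬝ᵥ v) • w) :
    (complexReflection μ v w)ᴴ * H * complexReflection μ v w = H := by
  set c := w ⬝ᵥ v with hc
  have hHv : H *ᵥ v = c • star w := by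
    simpa [star_vecMul, hH.eq] using congrArg star hvw
  have hcoeff : star μ * c + μ * star c + star c * c = 0 := by
    have hμ' := Unitary.star_mul_self_of_mem hμ
    have hν' := Unitary.star_mul_self_of_mem hν
    rw [star_add] at hν'
    linear_combination hν' - hμ'
  calc (complexReflection μ v w)ᴴ * H * complexReflection μ v w
      = (star μ * μ) • H +
          (star μ * c + μ * star c + star c * c) • vecMulVec (star w) w := by
        rw [conjTranspose_complexReflection, complexReflection_mul, hvw, vecMulVec_smul,
          mul_complexReflection, add_mulVec, smul_mulVec, smul_mulVec, hHv, vecMulVec_mulVec, ← hc,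
          op_smul_eq_smul, add_vecMulVec, smul_vecMulVec, smul_vecMulVec, smul_vecMulVec,
          smul_vecMulVec]
        module
    _ = H := by rw [hcoeff, Unitary.star_mul_self_of_mem hμ, one_smul, zero_smul, add_zero]

end ComplexReflection

section TriangleGroup

variable {R : Type*} [CommRing R] [StarRing R] {u : R}

/-- The matrix with rows `wⱼ` such that the generators of the triangle group are
`Rⱼ = conj(u) • 1 + eⱼ wⱼᵀ`. -/
def triangleRows (u ρ σ τ : R) : Matrix (Fin 3) (Fin 3) R :=
  !![u ^ 2 - star u, ρ, -u * star τ;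
     -u * star ρ, u ^ 2 - star u, σ;
     τ, -u * star σ, u ^ 2 - star u]

/-- The Hermitian form `H` of the triangle group, for `u` in any commutative star ring. -/
def triangleForm (u ρ σ τ : R) : Matrix (Fin 3) (Fin 3) R :=
  (star u ^ 2 - u) • triangleRows u ρ σ τ

/-- The generator `Rⱼ` of the triangle group, with `j` counted from `0`, for `u` in any commutative
star ring. -/
def triangleGenerator (u ρ σ τ : R) (j : Fin 3) : Matrix (Fin 3) (Fin 3) R :=
  complexReflection (star u) (Pi.single j 1) (triangleRows u ρ σ τ j)

theorem triangleRows_diag (u ρ σ τ : R) (j : Fin 3) :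
    triangleRows u ρ σ τ j j = u ^ 2 - star u := by
  fin_cases j <;> rfl

theorem neg_mul_star_sq_sub (hu : u ∈ unitary R) : -u * (star u ^ 2 - u) = u ^ 2 - star u := by
  linear_combination -star u * Unitary.star_mul_self_of_mem hu

theorem conjTranspose_triangleRows (hu : u ∈ unitary R) (ρ σ τ : R) :
    (triangleRows u ρ σ τ)ᴴ = -star u • triangleRows u ρ σ τ := by
  have hcancel (t : R) : star u * (u * t) = t := by
    rw [← mul_assoc, Unitary.star_mul_self_of_mem hu, one_mul]
  have hdiag : star u ^ 2 - u = -(star u * (u ^ 2 - star u)) := by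
    linear_combination u * Unitary.star_mul_self_of_mem hu
  ext i j
  fin_cases i <;> fin_cases j <;> simp [triangleRows, hcancel, hdiag]

theorem isHermitian_triangleForm (hu : u ∈ unitary R) (ρ σ τ : R) :
    (triangleForm u ρ σ τ).IsHermitian := by
  calc (triangleForm u ρ σ τ)ᴴ
      = (u ^ 2 - star u) • -star u • triangleRows u ρ σ τ := by
        simp [triangleForm, conjTranspose_triangleRows hu]
    _ = (star u * u) • triangleForm u ρ σ τ := by
        rw [← neg_mul_star_sq_sub hu, triangleForm]
        module
    _ = triangleForm u ρ σ τ := by rw [Unitary.star_mul_self_of_mem hu, one_smul]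

theorem conjTranspose_triangleGenerator_mul_mul (hu : u ∈ unitary R) (ρ σ τ : R) (j : Fin 3) :
    (triangleGenerator u ρ σ τ j)ᴴ * triangleForm u ρ σ τ * triangleGenerator u ρ σ τ j =
      triangleForm u ρ σ τ := by
  have hdot : triangleRows u ρ σ τ j ⬝ᵥ Pi.single j 1 = u ^ 2 - star u := by
    rw [dotProduct_single_one, triangleRows_diag]
  apply conjTranspose_complexReflection_mul_mul (isHermitian_triangleForm hu ρ σ τ)
    (Unitary.star_mem hu)
  · rw [hdot, add_sub_cancel]
    exact pow_mem hu 2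
  · rw [hdot, ← Pi.single_star, star_one, single_one_vecMul, star_sub, star_pow, star_star]
    rfl

theorem det_triangleGenerator (hu : u ∈ unitary R) (ρ σ τ : R) (j : Fin 3) :
    (triangleGenerator u ρ σ τ j).det = 1 := by
  rw [triangleGenerator, det_complexReflection, single_one_dotProduct, triangleRows_diag,
    Fintype.card_fin]
  calc star u ^ 3 + (u ^ 2 - star u) * star u ^ (3 - 1) = (star u * u) ^ 2 := by ring
    _ = 1 := by rw [Unitary.star_mul_self_of_mem hu, one_pow]

theorem stmt8_general (hu : u ∈ unitary R) (ρ σ τ : R) (j : Fin 3) :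
    (triangleGenerator u ρ σ τ j)ᴴ * triangleForm u ρ σ τ * triangleGenerator u ρ σ τ j =
        triangleForm u ρ σ τ ∧
      (triangleGenerator u ρ σ τ j).det = 1 :=
  ⟨conjTranspose_triangleGenerator_mul_mul hu ρ σ τ j, det_triangleGenerator hu ρ σ τ j⟩

end TriangleGroup

theorem uPar_mem_unitary (p : ℕ) : uPar p ∈ unitary ℂ := by
  rw [uPar]
  have h : (2 * Real.pi * Complex.I / (3 * p) : ℂ) = (2 * Real.pi / (3 * p) : ℝ) * Complex.I := by
    push_cast
    ring
  rw [h, ← Circle.coe_exp, Unitary.mem_iff_star_mul_self, Complex.star_def,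
    ← Circle.coe_inv_eq_conj, ← Circle.coe_mul, inv_mul_cancel, Circle.coe_one]

theorem alphaPar_eq (p : ℕ) :
    alphaPar p = (star (uPar p) ^ 2 - uPar p) * (uPar p ^ 2 - star (uPar p)) := by
  rw [alphaPar, starRingEnd_apply]
  have hu := Unitary.star_mul_self_of_mem (uPar_mem_unitary p)
  linear_combination -(star (uPar p) * uPar p + 2) * hu

theorem conj_betaPar (p : ℕ) (t : ℂ) :
    starRingEnd ℂ (betaPar p t) = (star (uPar p) ^ 2 - uPar p) * (-uPar p * star t) := by
  rw [betaPar, starRingEnd_apply, starRingEnd_apply, star_mul', star_sub, star_pow, star_star,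
    ← neg_mul_star_sq_sub (uPar_mem_unitary p)]
  ring

theorem Hmat_eq_triangleForm (p : ℕ) (ρ σ τ : ℂ) :
    Hmat p ρ σ τ = triangleForm (uPar p) ρ σ τ := by
  rw [Hmat, conj_betaPar, conj_betaPar, conj_betaPar, alphaPar_eq]
  simp [betaPar, triangleForm, triangleRows]

theorem R1mat_eq_triangleGenerator (p : ℕ) (ρ σ τ : ℂ) :
    R1mat p ρ σ τ = triangleGenerator (uPar p) ρ σ τ 0 := by
  ext i j
  fin_cases i <;> fin_cases j <;>
    simp [R1mat, triangleGenerator, complexReflection, triangleRows, vecMulVec_apply]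

theorem R2mat_eq_triangleGenerator (p : ℕ) (ρ σ τ : ℂ) :
    R2mat p ρ σ τ = triangleGenerator (uPar p) ρ σ τ 1 := by
  ext i j
  fin_cases i <;> fin_cases j <;>
    simp [R2mat, triangleGenerator, complexReflection, triangleRows, vecMulVec_apply]

theorem R3mat_eq_triangleGenerator (p : ℕ) (ρ σ τ : ℂ) :
    R3mat p ρ σ τ = triangleGenerator (uPar p) ρ σ τ 2 := by
  ext i j
  fin_cases i <;> fin_cases j <;>
    simp [R3mat, triangleGenerator, complexReflection, triangleRows, vecMulVec_apply]

/-- Each generator `Rⱼ` lies in `SU(H)`: it preserves the Hermitian form given by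
`H` and has determinant `1`. -/
theorem stmt8 (p : ℕ) (hp : 2 ≤ p) (ρ σ τ : ℂ) :
    ((R1mat p ρ σ τ)ᴴ * Hmat p ρ σ τ * R1mat p ρ σ τ = Hmat p ρ σ τ ∧
      (R1mat p ρ σ τ).det = 1) ∧
    ((R2mat p ρ σ τ)ᴴ * Hmat p ρ σ τ * R2mat p ρ σ τ = Hmat p ρ σ τ ∧
      (R2mat p ρ σ τ).det = 1) ∧
    ((R3mat p ρ σ τ)ᴴ * Hmat p ρ σ τ * R3mat p ρ σ τ = Hmat p ρ σ τ ∧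
      (R3mat p ρ σ τ).det = 1) := by
  simp only [Hmat_eq_triangleForm, R1mat_eq_triangleGenerator, R2mat_eq_triangleGenerator,
    R3mat_eq_triangleGenerator, stmt8_general (uPar_mem_unitary p), and_self]
end

section
/- Let ρ = 1 + ((−1 + i·√3)/2)·((1 + √5)/2), σ = 1, τ = 1 (the parameter S₂), and let p = 4 or p = 5. Then the lattice T(p, S₂) is generated by the union of two mirror stabilizers: the subgroup of GL(3,ℂ) generated by Stab(m₁) ∪ Stab(m₂) equals T(p, S₂), where m₁ is the mirror of the complex reflection R₁ and m₂ = span_ℂ{e₁, R₂·e₃} is the mirror of the complex reflection (R₁·R₂R₃R₂⁻¹)⁵. -/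
/-!
Up to the unit `u⁻¹`, the generators are rank-one perturbations `1 + aᵢ ⊗ fᵢ` of the identity whose
pairings `fᵢ(aⱼ)` form a Cartan matrix. Two such perturbations generate a quotient of a Hecke
algebra of dihedral type, so the product `fᵢ(aⱼ) fⱼ(aᵢ)` decides the length of their braid relation:
in `T(p, S₂)` it is 4 for `(R₁, R₂)`, 3 for `(R₂, R₃)` and `(R₁, R₃)`, and 5 for `(R₁, A)`, where
`A = R₂R₃R₂⁻¹`. In any group with these four relations, the centralizer of `R₁` contains `R₂R₁R₂`
and `(R₁AR₁AR₁)(R₂R₁R₃)`, and together with `R₁` and `A` these elements generate everything. The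
centralizer of `R₁` preserves its mirror, while `A`, whose root is `R₂e₃`, preserves every subspace
containing that root.
-/

open Matrix

noncomputable section

/-- The generator `R₁` of `T(p,(ρ,σ,τ))`. -/
def R1T (p : ℕ) (ρ σ τ : ℂ) : Matrix (Fin 3) (Fin 3) ℂ :=
  !![uPar p ^ 2, ρ, -(uPar p) * starRingEnd ℂ τ;
     0, starRingEnd ℂ (uPar p), 0;
     0, 0, starRingEnd ℂ (uPar p)]

/-- The generator `R₂` of `T(p,(ρ,σ,τ))`. -/
def R2T (p : ℕ) (ρ σ τ : ℂ) : Matrix (Fin 3) (Fin 3) ℂ :=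
  !![starRingEnd ℂ (uPar p), 0, 0;
     -(uPar p) * starRingEnd ℂ ρ, uPar p ^ 2, σ;
     0, 0, starRingEnd ℂ (uPar p)]

/-- The generator `R₃` of `T(p,(ρ,σ,τ))`. -/
def R3T (p : ℕ) (ρ σ τ : ℂ) : Matrix (Fin 3) (Fin 3) ℂ :=
  !![starRingEnd ℂ (uPar p), 0, 0;
     0, starRingEnd ℂ (uPar p), 0;
     τ, -(uPar p) * starRingEnd ℂ σ, uPar p ^ 2]

/-- The linear functional `x ↦ a·x₁ + b·x₂ + c·x₃` on `ℂ³`. -/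
def lfun (a b c : ℂ) : (Fin 3 → ℂ) →ₗ[ℂ] ℂ :=
  a • (LinearMap.proj 0 : (Fin 3 → ℂ) →ₗ[ℂ] ℂ) +
    b • (LinearMap.proj 1 : (Fin 3 → ℂ) →ₗ[ℂ] ℂ) +
    c • (LinearMap.proj 2 : (Fin 3 → ℂ) →ₗ[ℂ] ℂ)

/-- The mirror of `R₁`: `{x ∈ ℂ³ : α·x₁ + β₁·x₂ + conj(β₃)·x₃ = 0}`,
the `H`-orthogonal complement of `e₁`. -/
def mirror1T (p : ℕ) (ρ σ τ : ℂ) : Submodule ℂ (Fin 3 → ℂ) :=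
  LinearMap.ker (lfun (alphaPar p) (betaPar p ρ) (starRingEnd ℂ (betaPar p τ)))

/-- The stabilizer of a subspace `m` of `ℂ³` inside a subgroup `S` of `GL(3,ℂ)`:
the set of elements of `S` mapping `m` onto itself. -/
def mirrorStab (S : Subgroup (GL (Fin 3) ℂ)) (m : Submodule ℂ (Fin 3 → ℂ)) :
    Set (GL (Fin 3) ℂ) :=
  {g | g ∈ S ∧ m.map (Matrix.mulVecLin (g : Matrix (Fin 3) (Fin 3) ℂ)) = m}

end

section Braid

variable {M N G R : Type*}

/-- The alternating product `a * b * a * ⋯` with `n` factors, the first of which is `a`. -/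
def altProd [Monoid M] : ℕ → M → M → M
  | 0, _, _ => 1
  | n + 1, a, b => a * altProd n b a

/-- The braid relation of length `n` between `a` and `b`, written `brₙ(a, b)` in the literature on
complex reflection groups. -/
def IsBraid [Monoid M] (n : ℕ) (a b : M) : Prop :=
  altProd n a b = altProd n b a

theorem map_altProd [Monoid M] [Monoid N] (φ : M →* N) (n : ℕ) (a b : M) :
    φ (altProd n a b) = altProd n (φ a) (φ b) := by
  induction n generalizing a b with
  | zero => exact map_one φ
  | succ n ih => rw [altProd, altProd, map_mul, ih]

theorem isBraid_map_iff [Monoid M] [Monoid N] {φ : M →* N} (hφ : Function.Injective φ)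
    {n : ℕ} {a b : M} : IsBraid n (φ a) (φ b) ↔ IsBraid n a b := by
  simp only [IsBraid, ← map_altProd, hφ.eq_iff]

theorem altProd_smul [CommMonoid R] [Monoid M] [MulAction R M] [IsScalarTower R M M]
    [SMulCommClass R M M] (c : R) (n : ℕ) (a b : M) :
    altProd n (c • a) (c • b) = c ^ n • altProd n a b := by
  induction n generalizing a b with
  | zero => simp only [altProd, pow_zero, one_smul]
  | succ n ih => rw [altProd, altProd, ih, smul_mul_smul_comm, pow_succ']

theorem IsBraid.smul [CommMonoid R] [Monoid M] [MulAction R M] [IsScalarTower R M M]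
    [SMulCommClass R M M] {n : ℕ} {a b : M} (h : IsBraid n a b) (c : R) :
    IsBraid n (c • a) (c • b) := by
  rw [IsBraid, altProd_smul, altProd_smul, h]

theorem IsBraid.mul_mul_eq [Monoid M] {a b : M} (h : IsBraid 3 a b) :
    a * b * a = b * a * b := by
  simpa only [IsBraid, altProd, mul_one, mul_assoc] using h

theorem IsBraid.commute_mul_mul [Monoid M] {a b : M} (h : IsBraid 4 a b) :
    Commute (b * a * b) a := by
  simpa only [IsBraid, altProd, mul_one, ← mul_assoc, Commute, SemiconjBy] using h.symm

theorem IsBraid.semiconjBy_five [Monoid M] {a b : M} (h : IsBraid 5 a b) :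
    SemiconjBy (a * b * a * b * a) b a := by
  have h' : a * b * a * b * a = b * a * b * a * b := by
    simpa only [IsBraid, altProd, mul_one, mul_assoc] using h
  calc a * b * a * b * a * b = a * (b * a * b * a * b) := by simp only [mul_assoc]
    _ = a * (a * b * a * b * a) := by rw [h']

theorem IsBraid.semiconjBy_mul_mul_conj [Group G] {a b c : G} (h : IsBraid 3 a c) :
    SemiconjBy (b * a * c) a (b * c * b⁻¹) :=
  calc b * a * c * a = b * (a * c * a) := by group
    _ = b * (c * a * c) := by rw [h.mul_mul_eq]
    _ = b * c * b⁻¹ * (b * a * c) := by group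

theorem commute_of_isBraid_five_conj [Group G] {a b c : G} (h₁₃ : IsBraid 3 a c)
    (h₅ : IsBraid 5 a (b * c * b⁻¹)) :
    Commute (a * (b * c * b⁻¹) * a * (b * c * b⁻¹) * a * (b * a * c)) a :=
  h₅.semiconjBy_five.mul_left h₁₃.semiconjBy_mul_mul_conj

theorem IsBraid.semiconjBy_conj [Group G] {b c : G} (h : IsBraid 3 b c) :
    SemiconjBy c (b * c * b⁻¹) b :=
  calc c * (b * c * b⁻¹) = c * b * c * b⁻¹ := by group
    _ = b * c * b * b⁻¹ := by rw [h.mul_mul_eq]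
    _ = b * c := by group

theorem closure_le_of_isBraid [Group G] {a b c : G} (h₁₂ : IsBraid 4 a b) (h₂₃ : IsBraid 3 b c)
    (h₁₃ : IsBraid 3 a c) (h₅ : IsBraid 5 a (b * c * b⁻¹)) {K : Subgroup G}
    (hcent : ∀ g ∈ Subgroup.closure {a, b, c}, Commute g a → g ∈ K)
    (hconj : b * c * b⁻¹ ∈ K) : Subgroup.closure {a, b, c} ≤ K := by
  have ha : a ∈ Subgroup.closure {a, b, c} := Subgroup.subset_closure (by simp)
  have hb : b ∈ Subgroup.closure {a, b, c} := Subgroup.subset_closure (by simp)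
  have hc : c ∈ Subgroup.closure {a, b, c} := Subgroup.subset_closure (by simp)
  have haK : a ∈ K := hcent a ha (Commute.refl a)
  have hbabK : b * a * b ∈ K := hcent _ (mul_mem (mul_mem hb ha) hb) h₁₂.commute_mul_mul
  have hbacK : b * a * c ∈ K := by
    have alt_mem {L : Subgroup G} {x y : G} (hx : x ∈ L) (hy : y ∈ L) : x * y * x * y * x ∈ L :=
      mul_mem (mul_mem (mul_mem (mul_mem hx hy) hx) hy) hx
    have hmem : a * (b * c * b⁻¹) * a * (b * c * b⁻¹) * a * (b * a * c) ∈
        Subgroup.closure {a, b, c} :=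
      mul_mem (alt_mem ha (mul_mem (mul_mem hb hc) (inv_mem hb))) (mul_mem (mul_mem hb ha) hc)
    exact (Subgroup.mul_mem_cancel_left K (alt_mem haK hconj)).mp
      (hcent _ hmem (commute_of_isBraid_five_conj h₁₃ h₅))
  have hcK : c ∈ K := by
    have hc_eq : b * a * b * c = b * a * c * (b * c * b⁻¹) := by
      rw [mul_assoc (b * a) c, h₂₃.semiconjBy_conj.eq, mul_assoc]
    refine (Subgroup.mul_mem_cancel_left K hbabK).mp ?_
    exact hc_eq ▸ mul_mem hbacK hconj
  have hbK : b ∈ K := by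
    have hb_eq : c * (b * c * b⁻¹) = b * c := h₂₃.semiconjBy_conj
    exact (Subgroup.mul_mem_cancel_right K hcK).mp (hb_eq ▸ mul_mem hcK hconj)
  rw [Subgroup.closure_le]
  rintro g (rfl | rfl | rfl) <;> assumption

end Braid

section PseudoReflection

variable {n R : Type*} [Fintype n] [DecidableEq n]

/-- The operator `x ↦ c • (x + (f ⬝ᵥ x) • a)`, which multiplies by `c` on the hyperplane
`f ⬝ᵥ x = 0` and by `c * (1 + f ⬝ᵥ a)` on the root `a`. The factor `c` lets it represent a
complex reflection normalized to have determinant one. -/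
def pseudoReflection [CommRing R] (c : R) (a f : n → R) : Matrix n n R :=
  c • (1 + vecMulVec a f)

section CommRing

variable [CommRing R] {c q : R} {a b f g : n → R}

theorem isBraid_three_pseudoReflection (hfa : f ⬝ᵥ a = q - 1) (hgb : g ⬝ᵥ b = q - 1)
    (h : f ⬝ᵥ b * g ⬝ᵥ a = -q) :
    IsBraid 3 (pseudoReflection c a f) (pseudoReflection c b g) := by
  refine IsBraid.smul ?_ c
  simp only [IsBraid, altProd, mul_add, add_mul, mul_one, one_mul, vecMulVec_mul_vecMulVec,
    vecMulVec_smul, mul_smul_comm, hfa, hgb]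
  match_scalars <;> grind

theorem isBraid_four_pseudoReflection (hfa : f ⬝ᵥ a = q - 1) (hgb : g ⬝ᵥ b = q - 1)
    (h : f ⬝ᵥ b * g ⬝ᵥ a = -(2 * q)) :
    IsBraid 4 (pseudoReflection c a f) (pseudoReflection c b g) := by
  refine IsBraid.smul ?_ c
  simp only [IsBraid, altProd, mul_add, add_mul, mul_one, one_mul, vecMulVec_mul_vecMulVec,
    vecMulVec_smul, mul_smul_comm, hfa, hgb]
  match_scalars <;> grind

theorem isBraid_five_pseudoReflection {κ : R} (hfa : f ⬝ᵥ a = q - 1) (hgb : g ⬝ᵥ b = q - 1)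
    (h : f ⬝ᵥ b * g ⬝ᵥ a = -(κ * q)) (hκ : κ ^ 2 = 3 * κ - 1) :
    IsBraid 5 (pseudoReflection c a f) (pseudoReflection c b g) := by
  refine IsBraid.smul ?_ c
  simp only [IsBraid, altProd, mul_add, add_mul, mul_one, one_mul, vecMulVec_mul_vecMulVec,
    vecMulVec_smul, mul_smul_comm, hfa, hgb]
  match_scalars <;> grind

theorem mul_pseudoReflection_vecMul (A : Matrix n n R) :
    A * pseudoReflection c a (f ᵥ* A) = pseudoReflection c (A *ᵥ a) f * A := by
  simp only [pseudoReflection, mul_smul_comm, smul_mul_assoc, mul_add, add_mul, mul_one, one_mul,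
    mul_vecMulVec, vecMulVec_mul]

theorem pseudoReflection_mulVec (x : n → R) :
    pseudoReflection c a f *ᵥ x = c • (x + (f ⬝ᵥ x) • a) := by
  simp only [pseudoReflection, smul_mulVec, add_mulVec, one_mulVec, vecMulVec_mulVec,
    op_smul_eq_smul]

theorem vecMul_pseudoReflection (x : n → R) :
    x ᵥ* pseudoReflection c a f = c • (x + (x ⬝ᵥ a) • f) := by
  simp only [pseudoReflection, vecMul_smul, vecMul_add, vecMul_one, vecMul_vecMulVec]

theorem map_pseudoReflection_le {m : Submodule R (n → R)} (ha : a ∈ m) :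
    m.map (pseudoReflection c a f).mulVecLin ≤ m := by
  rintro _ ⟨x, hx, rfl⟩
  rw [mulVecLin_apply, pseudoReflection_mulVec]
  exact m.smul_mem _ (m.add_mem hx (m.smul_mem _ ha))

end CommRing

section Field

variable [Field R] {c : R} {a f : n → R}

theorem mem_eigenspace_pseudoReflection_iff (hc : c ≠ 0) (ha : a ≠ 0) {x : n → R} :
    x ∈ Module.End.eigenspace (pseudoReflection c a f).mulVecLin c ↔ f ⬝ᵥ x = 0 := by
  rw [Module.End.mem_eigenspace_iff, mulVecLin_apply, pseudoReflection_mulVec,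
    smul_right_inj hc, add_eq_left, smul_eq_zero_iff_left ha]

theorem map_mulVecLin_eq_of_le (g : GL n R) {m : Submodule R (n → R)}
    (h : m.map (g : Matrix n n R).mulVecLin ≤ m) : m.map (g : Matrix n n R).mulVecLin = m :=
  Submodule.eq_of_le_of_finrank_eq h <|
    (m.equivMapOfInjective _ (mulVec_injective_of_isUnit g.isUnit)).symm.finrank_eq

theorem map_eigenspace_eq_of_commute {g r : GL n R} (h : Commute g r) (μ : R) :
    (Module.End.eigenspace (r : Matrix n n R).mulVecLin μ).map (g : Matrix n n R).mulVecLin =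
      Module.End.eigenspace (r : Matrix n n R).mulVecLin μ := by
  refine map_mulVecLin_eq_of_le g ?_
  have hcomm : Commute (r : Matrix n n R).mulVecLin (g : Matrix n n R).mulVecLin := by
    simp only [Commute, SemiconjBy, Module.End.mul_eq_comp, ← mulVecLin_mul, ← Units.val_mul, h.eq]
  exact Set.mapsTo_iff_image_subset.mp (Module.End.mapsTo_genEigenspace_of_comm hcomm μ 1)

end Field

end PseudoReflection

section TriangleGroup

open ComplexConjugate

theorem uPar_ne_zero (p : ℕ) : uPar p ≠ 0 :=
  Complex.exp_ne_zero _

theorem conj_uPar (p : ℕ) : conj (uPar p) = (uPar p)⁻¹ := by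
  rw [uPar, ← Complex.exp_conj, ← Complex.exp_neg]
  simp only [map_div₀, map_mul, Complex.conj_ofReal, Complex.conj_I, map_natCast,
    Complex.conj_ofNat]
  ring_nf

theorem isPrimitiveRoot_uPar_pow_three {p : ℕ} (hp : p ≠ 0) : IsPrimitiveRoot (uPar p ^ 3) p := by
  convert Complex.isPrimitiveRoot_exp p hp using 1
  rw [uPar, ← Complex.exp_nat_mul]
  congr 1
  push_cast
  field_simp

/-- The pairings `fᵢ(eⱼ)` between the coroots `fᵢ` (the rows) and the roots `eⱼ` of the generators
of `T(p,(ρ,σ,τ))`, each generator being `x ↦ u⁻¹(x + fᵢ(x) eᵢ)`. It equals `(u⁻³ - 1)⁻¹ H`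
whenever `u³ ≠ 1`. -/
noncomputable def cartanMatrix (p : ℕ) (ρ σ τ : ℂ) : Matrix (Fin 3) (Fin 3) ℂ :=
  !![uPar p ^ 3 - 1, uPar p * ρ, -(uPar p ^ 2 * conj τ);
     -(uPar p ^ 2 * conj ρ), uPar p ^ 3 - 1, uPar p * σ;
     uPar p * τ, -(uPar p ^ 2 * conj σ), uPar p ^ 3 - 1]

variable (p : ℕ) (ρ σ τ : ℂ)

theorem R1T_eq_pseudoReflection :
    R1T p ρ σ τ =
      pseudoReflection (uPar p)⁻¹ (Pi.single 0 1) (cartanMatrix p ρ σ τ 0) := by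
  have hu := uPar_ne_zero p
  ext i j
  fin_cases i <;> fin_cases j <;>
    simp [R1T, conj_uPar, pseudoReflection, cartanMatrix, vecMulVec_apply, field]

theorem R2T_eq_pseudoReflection :
    R2T p ρ σ τ =
      pseudoReflection (uPar p)⁻¹ (Pi.single 1 1) (cartanMatrix p ρ σ τ 1) := by
  have hu := uPar_ne_zero p
  ext i j
  fin_cases i <;> fin_cases j <;>
    simp [R2T, conj_uPar, pseudoReflection, cartanMatrix, vecMulVec_apply, field]

theorem R3T_eq_pseudoReflection :
    R3T p ρ σ τ =
      pseudoReflection (uPar p)⁻¹ (Pi.single 2 1) (cartanMatrix p ρ σ τ 2) := by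
  have hu := uPar_ne_zero p
  ext i j
  fin_cases i <;> fin_cases j <;>
    simp [R3T, conj_uPar, pseudoReflection, cartanMatrix, vecMulVec_apply, field]

/-- The coroot of the complex reflection `R₂R₃R₂⁻¹`, whose root is `R₂e₃`. It solves
`f ᵥ* R₂ = f₃`, where `f₃` is the coroot of `R₃`. -/
noncomputable def conjugateCoroot : Fin 3 → ℂ :=
  uPar p • cartanMatrix p ρ σ τ 2 + conj σ • cartanMatrix p ρ σ τ 1

theorem conjugateCoroot_vecMul_R2T :
    conjugateCoroot p ρ σ τ ᵥ* R2T p ρ σ τ = cartanMatrix p ρ σ τ 2 := by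
  have hpair : conjugateCoroot p ρ σ τ ⬝ᵥ Pi.single 1 1 = -conj σ := by
    rw [dotProduct_single_one]
    change uPar p * -(uPar p ^ 2 * conj σ) + conj σ * (uPar p ^ 3 - 1) = _
    ring
  rw [R2T_eq_pseudoReflection, vecMul_pseudoReflection, hpair, conjugateCoroot, neg_smul,
    add_neg_cancel_right, inv_smul_smul₀ (uPar_ne_zero p)]

theorem cartanMatrix_zero_dotProduct_R2T_mulVec :
    cartanMatrix p ρ σ τ 0 ⬝ᵥ R2T p ρ σ τ *ᵥ Pi.single 2 1 = uPar p * (ρ * σ - conj τ) := by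
  have hu := uPar_ne_zero p
  rw [R2T_eq_pseudoReflection, pseudoReflection_mulVec, dotProduct_smul, dotProduct_add,
    dotProduct_smul, dotProduct_single_one, dotProduct_single_one, dotProduct_single_one]
  change (uPar p)⁻¹ * (-(uPar p ^ 2 * conj τ) + uPar p * σ * (uPar p * ρ)) = _
  field_simp
  ring

theorem conjugateCoroot_dotProduct_single_zero :
    conjugateCoroot p ρ σ τ ⬝ᵥ Pi.single 0 1 = -(uPar p ^ 2 * conj (ρ * σ - conj τ)) := by
  rw [dotProduct_single_one, map_sub, map_mul, Complex.conj_conj]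
  change uPar p * (uPar p * τ) + conj σ * -(uPar p ^ 2 * conj ρ) = _
  ring

variable {p ρ σ τ}

theorem mul_mul_inv_eq_pseudoReflection {r₂ r₃ : GL (Fin 3) ℂ}
    (hr₂ : (r₂ : Matrix (Fin 3) (Fin 3) ℂ) = R2T p ρ σ τ)
    (hr₃ : (r₃ : Matrix (Fin 3) (Fin 3) ℂ) = R3T p ρ σ τ) :
    ((r₂ * r₃ * r₂⁻¹ : GL (Fin 3) ℂ) : Matrix (Fin 3) (Fin 3) ℂ) =
      pseudoReflection (uPar p)⁻¹ (R2T p ρ σ τ *ᵥ Pi.single 2 1) (conjugateCoroot p ρ σ τ) := by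
  rw [Units.val_mul, Units.mul_inv_eq_iff_eq_mul, Units.val_mul, hr₂, hr₃,
    R3T_eq_pseudoReflection, ← conjugateCoroot_vecMul_R2T, mul_pseudoReflection_vecMul]

theorem isBraid_R1T_R2T (hρ : ‖ρ‖ ^ 2 = 2) : IsBraid 4 (R1T p ρ σ τ) (R2T p ρ σ τ) := by
  have hρρ : ρ * conj ρ = 2 := by rw [Complex.mul_conj']; exact_mod_cast hρ
  rw [R1T_eq_pseudoReflection, R2T_eq_pseudoReflection]
  refine isBraid_four_pseudoReflection (q := uPar p ^ 3) (dotProduct_single_one _ _)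
    (dotProduct_single_one _ _) ?_
  rw [dotProduct_single_one, dotProduct_single_one]
  change uPar p * ρ * -(uPar p ^ 2 * conj ρ) = _
  linear_combination (-uPar p ^ 3) * hρρ

theorem isBraid_R2T_R3T (hσ : ‖σ‖ = 1) : IsBraid 3 (R2T p ρ σ τ) (R3T p ρ σ τ) := by
  have hσσ : σ * conj σ = 1 := by simp [Complex.mul_conj', hσ]
  rw [R2T_eq_pseudoReflection, R3T_eq_pseudoReflection]
  refine isBraid_three_pseudoReflection (q := uPar p ^ 3) (dotProduct_single_one _ _)
    (dotProduct_single_one _ _) ?_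
  rw [dotProduct_single_one, dotProduct_single_one]
  change uPar p * σ * -(uPar p ^ 2 * conj σ) = _
  linear_combination (-uPar p ^ 3) * hσσ

theorem isBraid_R1T_R3T (hτ : ‖τ‖ = 1) : IsBraid 3 (R1T p ρ σ τ) (R3T p ρ σ τ) := by
  have hττ : τ * conj τ = 1 := by simp [Complex.mul_conj', hτ]
  rw [R1T_eq_pseudoReflection, R3T_eq_pseudoReflection]
  refine isBraid_three_pseudoReflection (q := uPar p ^ 3) (dotProduct_single_one _ _)
    (dotProduct_single_one _ _) ?_
  rw [dotProduct_single_one, dotProduct_single_one]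
  change -(uPar p ^ 2 * conj τ) * (uPar p * τ) = _
  linear_combination (-uPar p ^ 3) * hττ

theorem isBraid_R1T_pseudoReflection
    (hκ : ‖ρ * σ - conj τ‖ ^ 4 = 3 * ‖ρ * σ - conj τ‖ ^ 2 - 1) :
    IsBraid 5 (R1T p ρ σ τ)
      (pseudoReflection (uPar p)⁻¹ (R2T p ρ σ τ *ᵥ Pi.single 2 1) (conjugateCoroot p ρ σ τ)) := by
  rw [R1T_eq_pseudoReflection]
  refine isBraid_five_pseudoReflection (q := uPar p ^ 3) (κ := (‖ρ * σ - conj τ‖ : ℂ) ^ 2)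
    (dotProduct_single_one _ _) ?_ ?_ ?_
  · rw [dotProduct_mulVec, conjugateCoroot_vecMul_R2T]
    exact dotProduct_single_one _ _
  · rw [cartanMatrix_zero_dotProduct_R2T_mulVec, conjugateCoroot_dotProduct_single_zero,
      ← Complex.mul_conj']
    ring
  · rw [← pow_mul]
    exact_mod_cast hκ

theorem mirror1T_eq_eigenspace (hp : 2 ≤ p) :
    mirror1T p ρ σ τ = Module.End.eigenspace (R1T p ρ σ τ).mulVecLin (uPar p)⁻¹ := by
  have hu := uPar_ne_zero p
  have hu3 : (uPar p)⁻¹ ^ 3 - 1 ≠ 0 := by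
    rw [inv_pow, sub_ne_zero, inv_ne_one]
    exact (isPrimitiveRoot_uPar_pow_three (by lia)).ne_one (by lia)
  ext x
  have hform : lfun (alphaPar p) (betaPar p ρ) (conj (betaPar p τ)) x =
      ((uPar p)⁻¹ ^ 3 - 1) * (cartanMatrix p ρ σ τ 0 ⬝ᵥ x) := by
    rw [dotProduct, Fin.sum_univ_three]
    change alphaPar p * x 0 + betaPar p ρ * x 1 + conj (betaPar p τ) * x 2 =
      ((uPar p)⁻¹ ^ 3 - 1) * ((uPar p ^ 3 - 1) * x 0 + uPar p * ρ * x 1 +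
        -(uPar p ^ 2 * conj τ) * x 2)
    simp only [alphaPar, betaPar, conj_uPar, map_mul, map_sub, map_pow, map_inv₀, inv_inv]
    field_simp
    ring
  rw [R1T_eq_pseudoReflection, mem_eigenspace_pseudoReflection_iff (inv_ne_zero hu) (by simp),
    mirror1T, LinearMap.mem_ker, hform, mul_eq_zero_iff_left hu3]

theorem stmt19_general (hp : 2 ≤ p) (hρ : ‖ρ‖ ^ 2 = 2) (hσ : ‖σ‖ = 1) (hτ : ‖τ‖ = 1)
    (hκ : ‖ρ * σ - conj τ‖ ^ 4 = 3 * ‖ρ * σ - conj τ‖ ^ 2 - 1) {r₁ r₂ r₃ : GL (Fin 3) ℂ}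
    (hr₁ : (r₁ : Matrix (Fin 3) (Fin 3) ℂ) = R1T p ρ σ τ)
    (hr₂ : (r₂ : Matrix (Fin 3) (Fin 3) ℂ) = R2T p ρ σ τ)
    (hr₃ : (r₃ : Matrix (Fin 3) (Fin 3) ℂ) = R3T p ρ σ τ) :
    Subgroup.closure
        (mirrorStab (Subgroup.closure {r₁, r₂, r₃}) (mirror1T p ρ σ τ) ∪
          mirrorStab (Subgroup.closure {r₁, r₂, r₃})
            (Submodule.span ℂ {Pi.single 0 1, R2T p ρ σ τ *ᵥ Pi.single 2 1})) =
      Subgroup.closure {r₁, r₂, r₃} := by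
  have hA := mul_mul_inv_eq_pseudoReflection hr₂ hr₃
  have hinj : Function.Injective (Units.coeHom (Matrix (Fin 3) (Fin 3) ℂ)) := Units.val_injective
  refine le_antisymm ?_ (closure_le_of_isBraid ?_ ?_ ?_ ?_ (fun g hg hcomm => ?_) ?_)
  · exact (Subgroup.closure_le _).mpr (Set.union_subset (fun g hg => hg.1) fun g hg => hg.1)
  · simpa only [← isBraid_map_iff hinj, Units.coeHom_apply, hr₁, hr₂] using isBraid_R1T_R2T hρ
  · simpa only [← isBraid_map_iff hinj, Units.coeHom_apply, hr₂, hr₃] using isBraid_R2T_R3T hσ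
  · simpa only [← isBraid_map_iff hinj, Units.coeHom_apply, hr₁, hr₃] using isBraid_R1T_R3T hτ
  · simpa only [← isBraid_map_iff hinj, Units.coeHom_apply, hr₁, hA] using
      isBraid_R1T_pseudoReflection hκ
  · refine Subgroup.subset_closure (.inl ⟨hg, ?_⟩)
    rw [mirror1T_eq_eigenspace hp, ← hr₁, map_eigenspace_eq_of_commute hcomm]
  · refine Subgroup.subset_closure (.inr ⟨?_, map_mulVecLin_eq_of_le _ ?_⟩)
    · have hr₂T : r₂ ∈ Subgroup.closure {r₁, r₂, r₃} := Subgroup.subset_closure (by simp)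
      have hr₃T : r₃ ∈ Subgroup.closure {r₁, r₂, r₃} := Subgroup.subset_closure (by simp)
      exact mul_mem (mul_mem hr₂T hr₃T) (inv_mem hr₂T)
    · rw [hA]
      exact map_pseudoReflection_le (Submodule.subset_span (by simp))

end TriangleGroup

section S₂

/-- The coordinate `ρ` of the parameter `S₂`, that is `1 + ωφ` for the cube root of unity
`ω = (-1 + i√3)/2` and the golden ratio `φ`. -/
noncomputable def rhoS₂ : ℂ :=
  1 + ((-1 + Complex.I * √3) / 2) * ((1 + √5) / 2)

theorem norm_sq_rhoS₂ : ‖rhoS₂‖ ^ 2 = 2 := by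
  have h₃ : √3 ^ 2 = 3 := Real.sq_sqrt (by norm_num)
  have h₅ : √5 ^ 2 = 5 := Real.sq_sqrt (by norm_num)
  have hρ : rhoS₂ = (1 - (1 + √5) / 4 : ℝ) + (√3 * (1 + √5) / 4 : ℝ) * Complex.I := by
    rw [rhoS₂]
    push_cast
    ring
  rw [hρ, Complex.sq_norm, Complex.normSq_add_mul_I]
  linear_combination (1 + √5) ^ 2 / 16 * h₃ + h₅ / 4

theorem norm_rhoS₂_sub_one : ‖rhoS₂ - 1‖ = Real.goldenRatio := by
  have h₃ : √3 ^ 2 = 3 := Real.sq_sqrt (by norm_num)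
  have hω : ‖((-1 / 2 : ℝ) + (√3 / 2 : ℝ) * Complex.I : ℂ)‖ = 1 := by
    rw [Complex.norm_add_mul_I, Real.sqrt_eq_one]
    linear_combination h₃ / 4
  have hρ : rhoS₂ - 1 = ((-1 / 2 : ℝ) + (√3 / 2 : ℝ) * Complex.I) * Real.goldenRatio := by
    rw [rhoS₂, Real.goldenRatio]
    push_cast
    ring
  rw [hρ, norm_mul, hω, one_mul, Complex.norm_of_nonneg Real.goldenRatio_pos.le]

theorem goldenRatio_pow_four : Real.goldenRatio ^ 4 = 3 * Real.goldenRatio ^ 2 - 1 := by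
  linear_combination (Real.goldenRatio ^ 2 + Real.goldenRatio - 1) * Real.goldenRatio_sq

end S₂

/-- For the parameter `S₂ = (1 + ((−1+i√3)/2)·((1+√5)/2), 1, 1)` and `p = 4` or
`5`, the lattice `T(p,S₂)` is generated by the union of the stabilizers of the
mirror of `R₁` and of the mirror `span{e₁, R₂·e₃}` of the complex reflection
`(R₁·R₂R₃R₂⁻¹)⁵`. -/
theorem stmt19 (p : ℕ) (hp : p = 4 ∨ p = 5)
    (ρ σ τ : ℂ)
    (hρ : ρ = 1 + ((-1 + Complex.I * Real.sqrt 3) / 2) * ((1 + Real.sqrt 5) / 2))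
    (hσ : σ = 1) (hτ : τ = 1)
    (r₁ r₂ r₃ : GL (Fin 3) ℂ)
    (hr₁ : (↑r₁ : Matrix (Fin 3) (Fin 3) ℂ) = R1T p ρ σ τ)
    (hr₂ : (↑r₂ : Matrix (Fin 3) (Fin 3) ℂ) = R2T p ρ σ τ)
    (hr₃ : (↑r₃ : Matrix (Fin 3) (Fin 3) ℂ) = R3T p ρ σ τ) :
    Subgroup.closure
        (mirrorStab (Subgroup.closure {r₁, r₂, r₃}) (mirror1T p ρ σ τ) ∪
          mirrorStab (Subgroup.closure {r₁, r₂, r₃})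
            (Submodule.span ℂ
              {Pi.single 0 1, (R2T p ρ σ τ).mulVec (Pi.single 2 1)})) =
      Subgroup.closure {r₁, r₂, r₃} := by
  obtain rfl : ρ = rhoS₂ := hρ
  subst hσ hτ
  exact stmt19_general (by lia) norm_sq_rhoS₂ norm_one norm_one
    (by simpa [norm_rhoS₂_sub_one] using goldenRatio_pow_four) hr₁ hr₂ hr₃
end
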